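/- Let F = (f_1, f_2) be a multigerm in ℂ^n (n ≥ 4) with f_1 = (t,0,…,0) and with the 9-jet of f_2 equal to (t⁸, t⁵, t⁶, t⁷, 0, …, 0). Then F is not simple. -/

import Mathlib

/-!
The family `(t⁸ + e t⁹, t⁵, t⁶, t⁷ + c t⁹, 0, …, 0) + O(t¹⁰)`, together with the first axis,
deforms `F`, and for fixed `e ≠ 0` the parameter `c` is an invariant of `A`-equivalence; hence every
neighbourhood of a jet of `F` meets infinitely many classes.

Suppose `g ∘ f = f' ∘ h` for two members with parameters `c` and `c'`. The curves are `O(t⁵)`, so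
modulo `t¹⁰` only the linear part of `g` matters; it maps the first axis to itself. Hence the
coordinates of `f' ∘ h` other than the first are, modulo `t¹⁰`, combinations of `t⁵`, `t⁶` and
`t⁷ + c t⁹`, without `t⁸` term. For `h⁷ + c' h⁹` this kills the quadratic term of `h`, then for
`h⁶` it kills the cubic one, so `h = p t + O(t⁴)`. In the first coordinate `p⁸ t⁸ + e p⁹ t⁹` must be
a multiple of `t⁸ + e t⁹`, so `p = 1`; then `t⁷ + c' t⁹` is a multiple of `t⁷ + c t⁹`, so `c' = c`.
-/

open scoped Topology

namespace CurveSing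

/-- Pad a curve in `ℂ^d` to a curve in `ℂ^n` by appending zero coordinates. -/
def pad (d n : ℕ) (f : ℂ → Fin d → ℂ) : ℂ → Fin n → ℂ :=
  fun t j => if hj : (j : ℕ) < d then f t ⟨(j : ℕ), hj⟩ else 0

/-- The curve `t ↦ (0,…,0,t,0,…,0)` (the `i`-th coordinate axis of `ℂ^n`). -/
def axis (n i : ℕ) : ℂ → Fin n → ℂ := fun t j => if (j : ℕ) = i then t else 0

/-- The multigerm consisting of the `n` coordinate axes of `ℂ^n`. -/
def Gn (n : ℕ) : Fin n → ℂ → Fin n → ℂ := fun i => axis n (i : ℕ)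

/-- A (representative of a) curve germ in `ℂ^n`. -/
def IsCurveGerm (n : ℕ) (f : ℂ → Fin n → ℂ) : Prop :=
  AnalyticAt ℂ f 0 ∧ f 0 = 0

/-- A multigerm with `k` components in `ℂ^n`: each component is a curve germ and the
images of sufficiently small representatives of distinct components meet only at `0`. -/
def IsMultigerm (n k : ℕ) (F : Fin k → ℂ → Fin n → ℂ) : Prop :=
  (∀ i, IsCurveGerm n (F i)) ∧
  ∃ ε > (0 : ℝ), ∀ i j : Fin k, i ≠ j → ∀ s t : ℂ,
    ‖s‖ < ε → ‖t‖ < ε → F i s = F j t → F i s = 0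

/-- A germ of a biholomorphism `(E,0) → (E,0)`. -/
def IsBiholoGerm {E : Type*} [NormedAddCommGroup E] [NormedSpace ℂ E] (g : E → E) : Prop :=
  AnalyticAt ℂ g 0 ∧ g 0 = 0 ∧
  ∃ g' : E → E, AnalyticAt ℂ g' 0 ∧ g' 0 = 0 ∧
    (∀ᶠ x in 𝓝 (0 : E), g' (g x) = x) ∧ (∀ᶠ x in 𝓝 (0 : E), g (g' x) = x)

/-- `A`-equivalence of multigerms with `k` components in `ℂ^n`. -/
def AEquiv (n k : ℕ) (F F' : Fin k → ℂ → Fin n → ℂ) : Prop :=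
  ∃ g : (Fin n → ℂ) → Fin n → ℂ, IsBiholoGerm g ∧
    ∃ h : Fin k → ℂ → ℂ, (∀ i, IsBiholoGerm (h i)) ∧
      ∀ i, (fun t => g (F i t)) =ᶠ[𝓝 (0 : ℂ)] fun t => F' i (h i t)

/-- Stable `A`-equivalence: the two multigerms become `A`-equivalent after the standard
inclusions into a common `ℂ^N`. -/
def StablyAEquiv (n n' k : ℕ) (F : Fin k → ℂ → Fin n → ℂ)
    (F' : Fin k → ℂ → Fin n' → ℂ) : Prop :=
  ∃ N, n ≤ N ∧ n' ≤ N ∧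
    AEquiv N k (fun i => pad n N (F i)) (fun i => pad n' N (F' i))

/-- The `m`-jet of a curve, recorded as the tuple of iterated derivatives at `0`
of orders `0,…,m` (this determines and is determined by the degree-`m` Taylor
polynomial at `0`). -/
noncomputable def jet (n m : ℕ) (f : ℂ → Fin n → ℂ) : Fin (m + 1) → Fin n → ℂ :=
  fun i => iteratedDeriv (i : ℕ) f 0

/-- The `m`-jet of a multigerm. -/
noncomputable def jetF (n k m : ℕ) (F : Fin k → ℂ → Fin n → ℂ) : Fin k → Fin (m + 1) → Fin n → ℂ :=
  fun i => jet n m (F i)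

/-- A multigerm is simple if some neighbourhood of one of its jets meets only finitely
many `A`-equivalence classes of multigerms. -/
def Simple (n k : ℕ) (F : Fin k → ℂ → Fin n → ℂ) : Prop :=
  ∃ m : ℕ, ∃ U : Set (Fin k → Fin (m + 1) → Fin n → ℂ), IsOpen U ∧ jetF n k m F ∈ U ∧
    ∃ (N : ℕ) (R : Fin N → Fin k → ℂ → Fin n → ℂ),
      ∀ G : Fin k → ℂ → Fin n → ℂ, IsMultigerm n k G → jetF n k m G ∈ U →
        ∃ i, AEquiv n k G (R i)

/-- A curve germ is regular if its derivative at `0` does not vanish. -/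
def IsRegular (n : ℕ) (f : ℂ → Fin n → ℂ) : Prop := deriv f 0 ≠ 0

/-- `F` is stably `A`-equivalent to the pair with first component the regular curve
`(t,0,…,0)` and second component `g` (a curve in `ℂ^{d'}`). -/
def PairNF (d : ℕ) (F : Fin 2 → ℂ → Fin d → ℂ) (d' : ℕ) (g : ℂ → Fin d' → ℂ) : Prop :=
  StablyAEquiv d d' 2 F ![axis d' 0, g]

end CurveSing

namespace CurveSing

open Filter Asymptotics Polynomial

section Equivalence

variable {n k : ℕ} {F F' F'' : Fin k → ℂ → Fin n → ℂ}

lemma IsCurveGerm.tendsto {f : ℂ → Fin n → ℂ} (hf : IsCurveGerm n f) : Tendsto f (𝓝 0) (𝓝 0) := by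
  simpa only [hf.2] using hf.1.continuousAt.tendsto

namespace IsBiholoGerm

variable {E : Type*} [NormedAddCommGroup E] [NormedSpace ℂ E] {f g : E → E}

lemma tendsto (hg : IsBiholoGerm g) : Tendsto g (𝓝 0) (𝓝 0) := by
  simpa only [hg.2.1] using hg.1.continuousAt.tendsto

lemma exists_inverse (hg : IsBiholoGerm g) :
    ∃ g', IsBiholoGerm g' ∧ (∀ᶠ x in 𝓝 0, g' (g x) = x) ∧ ∀ᶠ x in 𝓝 0, g (g' x) = x := by
  obtain ⟨hga, hg0, g', hga', hg0', hl, hr⟩ := hg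
  exact ⟨g', ⟨hga', hg0', g, hga, hg0, hr, hl⟩, hl, hr⟩

lemma comp (hg : IsBiholoGerm g) (hf : IsBiholoGerm f) : IsBiholoGerm (g ∘ f) := by
  obtain ⟨g', hg', hgl, hgr⟩ := hg.exists_inverse
  obtain ⟨f', hf', hfl, hfr⟩ := hf.exists_inverse
  refine ⟨AnalyticAt.comp (by rw [hf.2.1]; exact hg.1) hf.1, by simp [hf.2.1, hg.2.1], f' ∘ g',
    AnalyticAt.comp (by rw [hg'.2.1]; exact hf'.1) hg'.1, by simp [hf'.2.1, hg'.2.1], ?_, ?_⟩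
  · filter_upwards [hf.tendsto.eventually hgl, hfl] with x hgx hfx
    simp only [Function.comp_apply, hgx, hfx]
  · filter_upwards [hg'.tendsto.eventually hfr, hgr] with x hfx hgx
    simp only [Function.comp_apply, hfx, hgx]

lemma deriv_ne_zero {h : ℂ → ℂ} (hh : IsBiholoGerm h) : deriv h 0 ≠ 0 := by
  obtain ⟨h', hh', hl, -⟩ := hh.exists_inverse
  have hcomp : HasDerivAt (h' ∘ h) (deriv h' 0 * deriv h 0) 0 :=
    HasDerivAt.comp 0 (by rw [hh.2.1]; exact hh'.1.differentiableAt.hasDerivAt)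
      hh.1.differentiableAt.hasDerivAt
  have hone : deriv h' 0 * deriv h 0 = 1 :=
    hcomp.unique ((hasDerivAt_id 0).congr_of_eventuallyEq hl)
  exact right_ne_zero_of_mul_eq_one hone

end IsBiholoGerm

lemma AEquiv.symm (hF : ∀ i, Tendsto (F i) (𝓝 0) (𝓝 0)) (H : AEquiv n k F F') :
    AEquiv n k F' F := by
  obtain ⟨g, hg, h, hh, heq⟩ := H
  obtain ⟨g', hg', hgl, -⟩ := hg.exists_inverse
  choose h' hh' _ hhr using fun i => (hh i).exists_inverse
  refine ⟨g', hg', h', hh', fun i => ?_⟩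
  filter_upwards [hhr i, (hh' i).tendsto.eventually (heq i),
    ((hF i).comp (hh' i).tendsto).eventually hgl] with t ht heqt hglt
  rw [← ht, ← heqt, ht]
  exact hglt

lemma AEquiv.trans (H : AEquiv n k F F') (H' : AEquiv n k F' F'') : AEquiv n k F F'' := by
  obtain ⟨g, hg, h, hh, heq⟩ := H
  obtain ⟨g', hg', h', hh', heq'⟩ := H'
  refine ⟨g' ∘ g, hg'.comp hg, fun i => h' i ∘ h i, fun i => (hh' i).comp (hh i), fun i => ?_⟩
  filter_upwards [heq i, (hh i).tendsto.eventually (heq' i)] with t ht ht'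
  simp only [Function.comp_apply, ht, ht']

lemma not_simple_of_modulus {X Y : Type*} [TopologicalSpace X] [TopologicalSpace Y] [T1Space Y]
    {x₀ : X} {y₀ : Y} [(𝓝[≠] x₀).NeBot] [(𝓝[≠] y₀).NeBot] {P : X → Y → Fin k → ℂ → Fin n → ℂ}
    (hP : ∀ x y, IsMultigerm n k (P x y))
    (hjet : ∀ m, Continuous fun z : X × Y => jetF n k m (P z.1 z.2))
    (hmod : ∀ x ≠ x₀, ∀ y y', AEquiv n k (P x y) (P x y') → y = y') :
    ¬ Simple n k (P x₀ y₀) := by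
  rintro ⟨m, U, hU, hmem, N, R, hR⟩
  have hnear : ∀ᶠ z in 𝓝 x₀ ×ˢ 𝓝 y₀, jetF n k m (P z.1 z.2) ∈ U := by
    rw [← nhds_prod_eq]
    exact (hjet m).continuousAt.eventually_mem (hU.mem_nhds hmem)
  obtain ⟨px, hpx, py, hpy, hjU⟩ := eventually_prod_iff.mp hnear
  have hpunctured : ∀ᶠ x in 𝓝[≠] x₀, px x ∧ x ≠ x₀ :=
    (hpx.filter_mono nhdsWithin_le_nhds).and eventually_mem_nhdsWithin
  obtain ⟨x, hx, hne⟩ := hpunctured.exists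
  choose i hi using fun y : {y // py y} => hR (P x y) (hP x y) (hjU hx y.2)
  have : Infinite {y // py y} := (infinite_of_mem_nhds y₀ hpy).to_subtype
  obtain ⟨y, y', hyy', hiy⟩ := Finite.exists_ne_map_eq_of_infinite i
  have hequiv : AEquiv n k (P x y) (P x y') :=
    (hi y).trans (hiy ▸ (hi y').symm fun j => ((hP x y').1 j).tendsto)
  exact hyy' (Subtype.ext (hmod x hne y y' hequiv))

end Equivalence

section Taylor

variable {𝕜 : Type*} [NontriviallyNormedField 𝕜]

lemma isBigO_pow_pow_of_le {m n : ℕ} (hmn : m ≤ n) :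
    (fun t : 𝕜 => t ^ n) =O[𝓝 0] fun t => t ^ m := by
  rcases hmn.eq_or_lt with rfl | h
  · exact isBigO_refl _ _
  · exact (isLittleO_pow_pow h).isBigO

lemma X_pow_dvd_of_eval_isBigO {n : ℕ} {P : 𝕜[X]}
    (hP : (fun t => P.eval t) =O[𝓝 0] fun t => t ^ n) : X ^ n ∣ P := by
  induction n with
  | zero => simp
  | succ n ih =>
    obtain ⟨Q, rfl⟩ := ih (hP.trans (isBigO_pow_pow_of_le n.le_succ))
    have hpow : ∀ᶠ t : 𝕜 in 𝓝[≠] 0, t ^ n ≠ 0 := by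
      filter_upwards [self_mem_nhdsWithin] with t ht using pow_ne_zero n ht
    have hQ : (fun t => Q.eval t) =O[𝓝[≠] 0] fun t => t := by
      simp only [eval_mul, eval_pow, eval_X] at hP
      refine ((isBigO_mul_iff_isBigO_div hpow).mp (hP.mono nhdsWithin_le_nhds)).congr' .rfl ?_
      filter_upwards [hpow] with t ht
      rw [pow_succ', mul_div_cancel_right₀ t ht]
    have hQ0 : Q.eval 0 = 0 :=
      tendsto_nhds_unique (Q.continuous.tendsto 0 |>.mono_left nhdsWithin_le_nhds)
        (hQ.trans_tendsto (tendsto_id.mono_left nhdsWithin_le_nhds))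
    rw [pow_succ]
    exact mul_dvd_mul_left _ (X_dvd_iff.mpr (by rw [coeff_zero_eq_eval_zero, hQ0]))

lemma coeff_eq_of_sub_eval_isBigO {n i : ℕ} {f : 𝕜 → 𝕜} {P Q : 𝕜[X]}
    (hP : (fun t => f t - P.eval t) =O[𝓝 0] fun t => t ^ n)
    (hQ : (fun t => f t - Q.eval t) =O[𝓝 0] fun t => t ^ n) (hi : i < n) :
    P.coeff i = Q.coeff i := by
  have hPQ : (fun t => (P - Q).eval t) =O[𝓝 0] fun t => t ^ n := by
    simpa only [eval_sub] using hP.symm.triangle hQ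
  simpa only [coeff_sub, sub_eq_zero] using X_pow_dvd_iff.mp (X_pow_dvd_of_eval_isBigO hPQ) i hi

section Analytic

variable {E : Type*} [NormedAddCommGroup E] [NormedSpace 𝕜 E] [CompleteSpace E] [CharZero 𝕜]
  {f g : 𝕜 → E}

lemma isBigO_sub_taylor_of_analyticAt (hf : AnalyticAt 𝕜 f 0) (n : ℕ) :
    (fun t => f t - ∑ i ∈ Finset.range n, (t ^ i / i.factorial) • iteratedDeriv i f 0)
      =O[𝓝 0] fun t => t ^ n := by
  obtain ⟨r, hr, hfr⟩ := hf.exists_eq_sum_add_pow_mul n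
  have hO := (isBigO_refl (fun t : 𝕜 => t ^ n) (𝓝 0)).smul (hr.continuousAt.isBigO_one 𝕜)
  refine hO.congr (fun t => ?_) fun t => by rw [smul_eq_mul, mul_one]
  rw [hfr t, add_sub_cancel_left]

lemma isBigO_sub_of_iteratedDeriv_eq (hf : AnalyticAt 𝕜 f 0) (hg : AnalyticAt 𝕜 g 0) {n : ℕ}
    (hfg : ∀ i < n, iteratedDeriv i f 0 = iteratedDeriv i g 0) :
    (fun t => f t - g t) =O[𝓝 0] fun t => t ^ n := by
  refine (isBigO_sub_taylor_of_analyticAt hf n).triangle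
    ((isBigO_sub_taylor_of_analyticAt hg n).symm.congr_left fun t => ?_)
  have hsum : ∑ i ∈ Finset.range n, (t ^ i / i.factorial) • iteratedDeriv i g 0 =
      ∑ i ∈ Finset.range n, (t ^ i / i.factorial) • iteratedDeriv i f 0 :=
    Finset.sum_congr rfl fun i hi => by rw [hfg i (Finset.mem_range.mp hi)]
  rw [hsum]

end Analytic

section Composition

variable {E G : Type*} [NormedAddCommGroup E] [NormedSpace 𝕜 E] [NormedAddCommGroup G]
  [NormedSpace 𝕜 G] {g : E → G}

lemma isBigO_sub_fderiv_of_analyticAt (hg : AnalyticAt 𝕜 g 0) (hg0 : g 0 = 0) :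
    (fun x => g x - fderiv 𝕜 g 0 x) =O[𝓝 0] fun x => ‖x‖ ^ 2 := by
  obtain ⟨p, hp⟩ := hg
  have hpair : Tendsto (fun x : E => (x, (0 : E))) (𝓝 0) (𝓝 (0, 0)) :=
    (continuous_id.prodMk continuous_const).tendsto 0
  refine (hp.isBigO_image_sub_norm_mul_norm_sub.comp_tendsto hpair).congr
    (fun x => ?_) fun x => ?_
  · simp [hp.fderiv_eq, hg0, Matrix.cons_fin_one]
  · simp [sq]

lemma isBigO_comp_sub_fderiv {α : Type*} {l : Filter α} {φ : α → 𝕜} {u v : α → E}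
    (hg : AnalyticAt 𝕜 g 0) (hg0 : g 0 = 0) (hφ : Tendsto φ l (𝓝 0)) (hv : v =O[l] φ)
    (huv : (fun a => u a - v a) =O[l] fun a => φ a ^ 2) :
    (fun a => g (u a) - fderiv 𝕜 g 0 (v a)) =O[l] fun a => φ a ^ 2 := by
  have hφ2 : (fun a => φ a ^ 2) =O[l] φ := by
    simpa [Function.comp_def] using (isBigO_pow_pow_of_le (𝕜 := 𝕜) one_le_two).comp_tendsto hφ
  have hu : u =O[l] φ := (huv.trans hφ2).congr_of_sub.mpr hv
  have hquad : (fun a => g (u a) - fderiv 𝕜 g 0 (u a)) =O[l] fun a => φ a ^ 2 :=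
    ((isBigO_sub_fderiv_of_analyticAt hg hg0).comp_tendsto (hu.trans_tendsto hφ)).trans
      (hu.norm_left.pow 2)
  have hlin : (fun a => fderiv 𝕜 g 0 (u a) - fderiv 𝕜 g 0 (v a)) =O[l] fun a => φ a ^ 2 := by
    simpa only [map_sub] using ((fderiv 𝕜 g 0).isBigO_comp _ _).trans huv
  exact hquad.triangle hlin

end Composition

section Powers

variable {h : 𝕜 → 𝕜} {p s : 𝕜} {m : ℕ}

lemma isBigO_pow_sub_of_isBigO_sub (hm : m ≠ 0)
    (hh : (fun t => h t - (p * t + s * t ^ (m + 1))) =O[𝓝 0] fun t => t ^ (m + 2)) (n : ℕ) :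
    (fun t => h t ^ (n + 1) - (p ^ (n + 1) * t ^ (n + 1) + (n + 1) * p ^ n * s * t ^ (n + m + 1)))
      =O[𝓝 0] fun t => t ^ (n + m + 2) := by
  have hhO : h =O[𝓝 0] fun t : 𝕜 => t := by
    refine ((hh.trans ?_).congr_of_sub).mpr ?_
    · simpa using isBigO_pow_pow_of_le (𝕜 := 𝕜) (m := 1) (n := m + 2) (by omega)
    · refine ((isBigO_refl _ _).const_mul_left p).add (IsBigO.const_mul_left ?_ s)
      simpa using isBigO_pow_pow_of_le (𝕜 := 𝕜) (m := 1) (n := m + 1) (by omega)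
  induction n with
  | zero => simpa using hh
  | succ n ih =>
    have hA : (fun t => p ^ (n + 1) * t ^ (n + 1) + (n + 1) * p ^ n * s * t ^ (n + m + 1))
        =O[𝓝 0] fun t => t ^ (n + 1) :=
      ((isBigO_refl _ _).const_mul_left _).add
        ((isBigO_pow_pow_of_le (by omega)).const_mul_left _)
    have hcross : (fun t => ((n + 1) * p ^ n * s ^ 2) * t ^ (n + 2 * m + 2))
        =O[𝓝 0] fun t => t ^ (n + 1 + m + 2) :=
      (isBigO_pow_pow_of_le (by omega)).const_mul_left _
    refine (((ih.mul hhO).congr_right fun t => by ring).add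
      (((hA.mul hh).congr_right fun t => by ring).add hcross)).congr_left fun t => ?_
    push_cast
    ring

lemma eq_zero_of_pow_sub_eval_isBigO [CharZero 𝕜] (hm : m ≠ 0) (hp : p ≠ 0)
    (hh : (fun t => h t - (p * t + s * t ^ (m + 1))) =O[𝓝 0] fun t => t ^ (m + 2)) {n : ℕ}
    {P : 𝕜[X]} (hP : P.coeff (n + m + 1) = 0)
    (hhP : (fun t => h t ^ (n + 1) - P.eval t) =O[𝓝 0] fun t => t ^ (n + m + 2)) : s = 0 := by
  have hQ : (fun t => h t ^ (n + 1) - (C (p ^ (n + 1)) * X ^ (n + 1) +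
      C ((n + 1) * p ^ n * s) * X ^ (n + m + 1)).eval t) =O[𝓝 0] fun t => t ^ (n + m + 2) := by
    simpa only [eval_add, eval_mul, eval_C, eval_pow, eval_X] using
      isBigO_pow_sub_of_isBigO_sub hm hh n
  have hcoeff := coeff_eq_of_sub_eval_isBigO hQ hhP (i := n + m + 1) (by omega)
  simpa [-map_pow, -map_mul, hP, hp, hm, coeff_X_pow, Nat.cast_add_one_ne_zero] using hcoeff

lemma isBigO_sub_deriv_mul_of_pow_sub_eval [CompleteSpace 𝕜] [CharZero 𝕜]
    (hh : AnalyticAt 𝕜 h 0) (h0 : h 0 = 0) (h1 : deriv h 0 ≠ 0) {n : ℕ} {P Q : 𝕜[X]}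
    (hP : P.coeff (n + 3) = 0)
    (hhP : (fun t => h t ^ (n + 1) - P.eval t) =O[𝓝 0] fun t => t ^ (n + 4))
    (hQ : Q.coeff (n + 3) = 0)
    (hhQ : (fun t => h t ^ (n + 2) - Q.eval t) =O[𝓝 0] fun t => t ^ (n + 4)) :
    (fun t => h t - deriv h 0 * t) =O[𝓝 0] fun t => t ^ 4 := by
  set p := deriv h 0
  set q := iteratedDeriv 2 h 0 / 2
  set r := iteratedDeriv 3 h 0 / 6
  have h3 : (fun t => h t - (p * t + q * t ^ 2)) =O[𝓝 0] fun t => t ^ 3 := by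
    refine (isBigO_sub_taylor_of_analyticAt hh 3).congr_left fun t => ?_
    simp only [Finset.sum_range_succ, Finset.sum_range_zero, iteratedDeriv_zero, iteratedDeriv_one,
      h0, smul_eq_mul, Nat.factorial, p, q]
    push_cast
    ring
  have h4 : (fun t => h t - (p * t + q * t ^ 2 + r * t ^ 3)) =O[𝓝 0] fun t => t ^ 4 := by
    refine (isBigO_sub_taylor_of_analyticAt hh 4).congr_left fun t => ?_
    simp only [Finset.sum_range_succ, Finset.sum_range_zero, iteratedDeriv_zero, iteratedDeriv_one,
      h0, smul_eq_mul, Nat.factorial, p, q, r]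
    push_cast
    ring
  have hq : q = 0 := eq_zero_of_pow_sub_eval_isBigO one_ne_zero h1 h3 (n := n + 1) hQ hhQ
  simp only [hq, zero_mul, add_zero] at h4
  have hr : r = 0 := eq_zero_of_pow_sub_eval_isBigO two_ne_zero h1 h4 hP hhP
  simpa only [hr, zero_mul, add_zero] using h4

end Powers

end Taylor

section NormalForm

variable {e c c' : ℂ}

/-- The nonzero coordinates of the normal form of the second component, with moduli `e` and `c`;
at `e = c = 0` it is the curve `(t⁸, t⁵, t⁶, t⁷)`. -/
def normalForm (e c t : ℂ) : Fin 4 → ℂ :=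
  ![t ^ 8 + e * t ^ 9, t ^ 5, t ^ 6, t ^ 7 + c * t ^ 9]

lemma normalForm_zero_zero : normalForm 0 0 = fun t => ![t ^ 8, t ^ 5, t ^ 6, t ^ 7] := by
  funext t
  simp only [normalForm, zero_mul, add_zero]

/-- The polynomial in `t` given by the linear form with coefficient vector `v` on
`normalForm e c`; its coefficients are what is compared between two normal forms. -/
noncomputable def normalFormCombination (e c : ℂ) (v : Fin 4 → ℂ) : ℂ[X] :=
  C (v 0) * (X ^ 8 + C e * X ^ 9) + C (v 1) * X ^ 5 + C (v 2) * X ^ 6 +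
    C (v 3) * (X ^ 7 + C c * X ^ 9)

lemma eval_normalFormCombination (v : Fin 4 → ℂ) (t : ℂ) :
    (normalFormCombination e c v).eval t = v ⬝ᵥ normalForm e c t := by
  simp [normalFormCombination, normalForm, dotProduct, Fin.sum_univ_four]

lemma coeff_seven_normalFormCombination (v : Fin 4 → ℂ) :
    (normalFormCombination e c v).coeff 7 = v 3 := by
  simp [normalFormCombination, coeff_X_pow]

lemma coeff_eight_normalFormCombination (v : Fin 4 → ℂ) :
    (normalFormCombination e c v).coeff 8 = v 0 := by
  simp [normalFormCombination, coeff_X_pow]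

lemma coeff_nine_normalFormCombination (v : Fin 4 → ℂ) :
    (normalFormCombination e c v).coeff 9 = v 0 * e + v 3 * c := by
  simp [normalFormCombination, coeff_X_pow]

lemma analyticAt_normalForm : AnalyticAt ℂ (normalForm e c) 0 := by
  refine AnalyticAt.pi fun j => ?_
  fin_cases j
  · change AnalyticAt ℂ (fun t => t ^ 8 + e * t ^ 9) 0; fun_prop
  · change AnalyticAt ℂ (fun t => t ^ 5) 0; fun_prop
  · change AnalyticAt ℂ (fun t => t ^ 6) 0; fun_prop
  · change AnalyticAt ℂ (fun t => t ^ 7 + c * t ^ 9) 0; fun_prop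

lemma normalForm_isBigO : normalForm e c =O[𝓝 0] fun t : ℂ => t ^ 5 := by
  have hpow (n : ℕ) (hn : 5 ≤ n) : (fun t : ℂ => t ^ n) =O[𝓝 0] fun t => t ^ 5 :=
    isBigO_pow_pow_of_le hn
  refine isBigO_pi.mpr fun j => ?_
  fin_cases j
  · exact (hpow 8 (by norm_num)).add ((hpow 9 (by norm_num)).const_mul_left e)
  · exact hpow 5 le_rfl
  · exact hpow 6 (by norm_num)
  · exact (hpow 7 (by norm_num)).add ((hpow 9 (by norm_num)).const_mul_left c)

variable {h : ℂ → ℂ} {M : Matrix (Fin 4) (Fin 4) ℂ}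

lemma isBigO_sub_normalFormCombination
    (H : (fun t => normalForm e c' (h t) - M.mulVec (normalForm e c t)) =O[𝓝 0] fun t => t ^ 10)
    (j : Fin 4) :
    (fun t => normalForm e c' (h t) j - (normalFormCombination e c (M j)).eval t)
      =O[𝓝 0] fun t => t ^ 10 := by
  simp only [eval_normalFormCombination]
  exact isBigO_pi.mp H j

lemma isBigO_sub_deriv_mul_of_normalForm_comp (hh : IsBiholoGerm h) (hM₂ : M 2 0 = 0)
    (hM₃ : M 3 0 = 0)
    (H : (fun t => normalForm e c' (h t) - M.mulVec (normalForm e c t)) =O[𝓝 0] fun t => t ^ 10) :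
    (fun t => h t - deriv h 0 * t) =O[𝓝 0] fun t => t ^ 4 := by
  have h910 := isBigO_pow_pow_of_le (𝕜 := ℂ) (m := 9) (n := 10) (by norm_num)
  have hhO : h =O[𝓝 0] fun t : ℂ => t := by
    simpa [hh.2.1] using hh.1.differentiableAt.isBigO_sub
  have h6 : (fun t => h t ^ 6 - (normalFormCombination e c (M 2)).eval t)
      =O[𝓝 0] fun t => t ^ 9 := (isBigO_sub_normalFormCombination H 2).trans h910
  have h7 : (fun t => h t ^ 7 - (normalFormCombination e c (M 3)).eval t)
      =O[𝓝 0] fun t => t ^ 9 := by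
    refine (((isBigO_sub_normalFormCombination H 3).trans h910).sub
      ((hhO.pow 9).const_mul_left c')).congr_left fun t => ?_
    simp only [normalForm, Matrix.cons_val]
    ring
  exact isBigO_sub_deriv_mul_of_pow_sub_eval hh.1 hh.2.1 hh.deriv_ne_zero (n := 5)
    ((coeff_eight_normalFormCombination _).trans hM₂) h6
    ((coeff_eight_normalFormCombination _).trans hM₃) h7

lemma isBigO_pow_sub_of_linear {p : ℂ} (hlin : (fun t => h t - p * t) =O[𝓝 0] fun t => t ^ 4)
    (n : ℕ) (hn : 6 ≤ n) :
    (fun t => h t ^ (n + 1) - p ^ (n + 1) * t ^ (n + 1)) =O[𝓝 0] fun t => t ^ 10 := by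
  have hpow := isBigO_pow_sub_of_isBigO_sub (h := h) (p := p) (s := 0) (m := 2) two_ne_zero
    (by simpa using hlin) n
  simp only [mul_zero, zero_mul, add_zero] at hpow
  exact hpow.trans (isBigO_pow_pow_of_le (by omega))

lemma eq_of_normalForm_comp (he : e ≠ 0) (hh : IsBiholoGerm h) (hM₂ : M 2 0 = 0)
    (hM₃ : M 3 0 = 0)
    (H : (fun t => normalForm e c' (h t) - M.mulVec (normalForm e c t)) =O[𝓝 0] fun t => t ^ 10) :
    c = c' := by
  set p := deriv h 0
  have hp : p ≠ 0 := hh.deriv_ne_zero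
  have hpow := isBigO_pow_sub_of_linear (isBigO_sub_deriv_mul_of_normalForm_comp hh hM₂ hM₃ H)
  have hrow := isBigO_sub_normalFormCombination H
  have hP₀ : (fun t => normalForm e c' (h t) 0 - (C (p ^ 8) * X ^ 8 + C (e * p ^ 9) * X ^ 9).eval t)
      =O[𝓝 0] fun t => t ^ 10 := by
    refine ((hpow 7 (by norm_num)).add ((hpow 8 (by norm_num)).const_mul_left e)).congr_left
      fun t => ?_
    simp only [normalForm, Matrix.cons_val, eval_add, eval_mul, eval_pow, eval_C, eval_X, p]
    ring
  have hP₃ : (fun t => normalForm e c' (h t) 3 -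
      (C (p ^ 7) * X ^ 7 + C (c' * p ^ 9) * X ^ 9).eval t) =O[𝓝 0] fun t => t ^ 10 := by
    refine ((hpow 6 le_rfl).add ((hpow 8 (by norm_num)).const_mul_left c')).congr_left fun t => ?_
    simp only [normalForm, Matrix.cons_val, eval_add, eval_mul, eval_pow, eval_C, eval_X, p]
    ring
  have hcoeff₀ {i : ℕ} (hi : i < 10) := coeff_eq_of_sub_eval_isBigO (hrow 0) hP₀ hi
  have hcoeff₃ {i : ℕ} (hi : i < 10) := coeff_eq_of_sub_eval_isBigO (hrow 3) hP₃ hi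
  have hM₀₃ : M 0 3 = 0 := by
    simpa [-map_pow, -map_mul, coeff_seven_normalFormCombination, coeff_X_pow]
      using hcoeff₀ (i := 7) (by norm_num)
  have hM₀₀ : M 0 0 = p ^ 8 := by
    simpa [-map_pow, -map_mul, coeff_eight_normalFormCombination, coeff_X_pow]
      using hcoeff₀ (i := 8) (by norm_num)
  have hp1 : p = 1 := by
    have h9 : p ^ 8 * e = e * p ^ 9 := by
      simpa [-map_pow, -map_mul, coeff_nine_normalFormCombination, coeff_X_pow, hM₀₀, hM₀₃]
        using hcoeff₀ (i := 9) (by norm_num)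
    exact mul_left_cancel₀ (mul_ne_zero he (pow_ne_zero 8 hp)) (by linear_combination -h9)
  have hM₃₃ : M 3 3 = 1 := by
    simpa [-map_pow, -map_mul, coeff_seven_normalFormCombination, coeff_X_pow, hp1]
      using hcoeff₃ (i := 7) (by norm_num)
  simpa [-map_pow, -map_mul, coeff_nine_normalFormCombination, coeff_X_pow, hM₃, hM₃₃, hp1]
    using hcoeff₃ (i := 9) (by norm_num)

end NormalForm

section Coordinates

variable {d m n : ℕ}

lemma axis_eq_smul (n i : ℕ) (t : ℂ) : axis n i t = t • axis n i 1 := by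
  ext j
  simp [axis]

lemma pad_castLE (hmn : m ≤ n) (f : ℂ → Fin m → ℂ) (t : ℂ) (j : Fin m) :
    pad m n f t (j.castLE hmn) = f t j := by
  simp [pad]

lemma pad_eq_sum (f : ℂ → Fin m → ℂ) (t : ℂ) :
    pad m n f t = ∑ j : Fin m, f t j • axis n j 1 := by
  ext k
  simp only [pad, axis, Finset.sum_apply, Pi.smul_apply, smul_eq_mul, mul_ite, mul_one, mul_zero]
  split_ifs with hk
  · rw [Finset.sum_eq_single ⟨k, hk⟩] <;> simp +contextual [Fin.ext_iff, eq_comm]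
  · exact (Finset.sum_eq_zero fun j _ => if_neg (by omega)).symm

lemma analyticAt_pad {f : ℂ → Fin m → ℂ} {t : ℂ} (hf : AnalyticAt ℂ f t) :
    AnalyticAt ℂ (pad m n f) t := by
  have hsum : pad m n f = fun t => ∑ j : Fin m, f t j • axis n j 1 := funext (pad_eq_sum f)
  rw [hsum]
  exact Finset.univ.analyticAt_fun_sum fun j _ => (analyticAt_pi_iff.mp hf j).smul analyticAt_const

lemma pad_isBigO {f : ℂ → Fin m → ℂ} {φ : ℂ → ℂ} {l : Filter ℂ} (hf : f =O[l] φ) :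
    pad m n f =O[l] φ := by
  refine isBigO_pi.mpr fun j => ?_
  by_cases hj : (j : ℕ) < m
  · simpa only [pad, hj, dite_true] using isBigO_pi.mp hf ⟨j, hj⟩
  · simpa only [pad, hj, dite_false] using isBigO_zero φ l

/-- The matrix of the block of the linear map `A` on `ℂ^n` that belongs to the first `m`
coordinates. -/
noncomputable def leadingBlock (hmn : m ≤ n) (A : (Fin n → ℂ) →L[ℂ] Fin n → ℂ) :
    Matrix (Fin m) (Fin m) ℂ :=
  .of fun k j => A (axis n j 1) (k.castLE hmn)

lemma map_pad_castLE (hmn : m ≤ n) (A : (Fin n → ℂ) →L[ℂ] Fin n → ℂ) (f : ℂ → Fin m → ℂ) (t : ℂ)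
    (k : Fin m) : A (pad m n f t) (k.castLE hmn) = (leadingBlock hmn A).mulVec (f t) k := by
  simp [pad_eq_sum, leadingBlock, Matrix.mulVec, dotProduct, mul_comm]

lemma fderiv_axis_apply_eq_zero {g : (Fin n → ℂ) → Fin n → ℂ} (hg : AnalyticAt ℂ g 0) {i : ℕ}
    {h : ℂ → ℂ} (H : (fun t => g (axis n i t)) =ᶠ[𝓝 0] fun t => axis n i (h t)) {j : Fin n}
    (hj : (j : ℕ) ≠ i) : fderiv ℂ g 0 (axis n i 1) j = 0 := by
  have haxis : HasDerivAt (axis n i) (axis n i 1) 0 := by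
    rw [funext (axis_eq_smul n i)]
    simpa using (hasDerivAt_id (0 : ℂ)).smul_const (axis n i 1)
  have hg' : HasFDerivAt g (fderiv ℂ g 0) (axis n i 0) := by
    rw [axis_eq_smul, zero_smul]
    exact hg.differentiableAt.hasFDerivAt
  have hconst : (fun t => g (axis n i t) j) =ᶠ[𝓝 0] fun _ => 0 := by
    filter_upwards [H] with t ht
    rw [ht, axis, if_neg hj]
  exact (hasDerivAt_pi.mp (hg'.comp_hasDerivAt 0 haxis) j).unique
    ((hasDerivAt_const 0 0).congr_of_eventuallyEq hconst)

lemma isMultigerm_of_axis {F : Fin 2 → ℂ → Fin n → ℂ} {i : ℕ} (hF : ∀ k, IsCurveGerm n (F k))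
    (hF0 : F 0 = axis n i) {j : Fin n} (hj : (j : ℕ) ≠ i)
    (hne : ∀ᶠ t in 𝓝 0, F 1 t j = 0 → t = 0) : IsMultigerm n 2 F := by
  obtain ⟨ε, hε, hball⟩ := Metric.eventually_nhds_iff.mp hne
  have hmeet (s t : ℂ) (ht : ‖t‖ < ε) (hst : F 0 s = F 1 t) : F 1 t = 0 := by
    have ht0 : t = 0 := hball (by simpa using ht) (by rw [← hst, hF0, axis, if_neg hj])
    rw [ht0, (hF 1).2]
  refine ⟨hF, ε, hε, fun k l hkl s t hs ht hst => ?_⟩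
  fin_cases k <;> fin_cases l
  · exact absurd rfl hkl
  · exact hst.trans (hmeet s t ht hst)
  · exact hmeet t s hs hst.symm
  · exact absurd rfl hkl

lemma eq_of_aEquiv_of_isBigO_sub_normalForm (hd : 4 ≤ d) {G G' : Fin 2 → ℂ → Fin d → ℂ}
    {e c c' : ℂ} (he : e ≠ 0) (hG0 : G 0 = axis d 0) (hG0' : G' 0 = axis d 0)
    (hG : (fun t => G 1 t - pad 4 d (normalForm e c) t) =O[𝓝 0] fun t => t ^ 10)
    (hG' : (fun t => G' 1 t - pad 4 d (normalForm e c') t) =O[𝓝 0] fun t => t ^ 10)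
    (H : AEquiv d 2 G G') : c = c' := by
  obtain ⟨g, ⟨hg, hg0, -⟩, h, hh, heq⟩ := H
  have haxis : (fun t => g (axis d 0 t)) =ᶠ[𝓝 0] fun t => axis d 0 (h 0 t) := by
    simpa only [hG0, hG0'] using heq 0
  have hhO : h 1 =O[𝓝 0] fun t : ℂ => t := by
    simpa [(hh 1).2.1] using (hh 1).1.differentiableAt.isBigO_sub
  have hsource : (fun t => g (G 1 t) - fderiv ℂ g 0 (pad 4 d (normalForm e c) t))
      =O[𝓝 0] fun t => t ^ 10 := by
    simpa only [← pow_mul] using isBigO_comp_sub_fderiv (φ := fun t => t ^ 5) hg hg0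
      ((continuous_pow 5).tendsto' 0 0 (by norm_num)) (pad_isBigO normalForm_isBigO)
      (by simpa only [← pow_mul] using hG)
  have htarget : (fun t => g (G 1 t) - pad 4 d (normalForm e c') (h 1 t))
      =O[𝓝 0] fun t => t ^ 10 := by
    refine ((hG'.comp_tendsto (hh 1).tendsto).trans (hhO.pow 10)).congr' ?_ .rfl
    filter_upwards [heq 1] with t ht
    simp only [Function.comp_apply, ht]
  have hblock := htarget.symm.triangle hsource
  refine eq_of_normalForm_comp he (hh 1) (M := leadingBlock hd (fderiv ℂ g 0))
    (fderiv_axis_apply_eq_zero hg haxis (by simp)) (fderiv_axis_apply_eq_zero hg haxis (by simp))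
    (isBigO_pi.mpr fun j => (isBigO_pi.mp hblock (j.castLE hd)).congr_left fun t => ?_)
  simp only [Pi.sub_apply, pad_castLE, map_pad_castLE]

end Coordinates

section Deformation

variable {n k : ℕ} {F : Fin k → ℂ → Fin n → ℂ}

/-- The multigerm `F` with the monomial curve `t ↦ t^N v` added to its `i`-th component. -/
def addMonomial (F : Fin k → ℂ → Fin n → ℂ) (i : Fin k) (N : ℕ) (v : Fin n → ℂ) :
    Fin k → ℂ → Fin n → ℂ :=
  Function.update F i fun t => F i t + t ^ N • v

lemma addMonomial_zero (i : Fin k) (N : ℕ) : addMonomial F i N 0 = F := by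
  simp [addMonomial]

lemma isCurveGerm_addMonomial {j : Fin k} (hF : IsCurveGerm n (F j)) (i : Fin k) {N : ℕ}
    (hN : N ≠ 0) (v : Fin n → ℂ) : IsCurveGerm n (addMonomial F i N v j) := by
  rcases eq_or_ne j i with rfl | hj
  · have hFj := hF.1
    rw [addMonomial, Function.update_self]
    exact ⟨by fun_prop, by simp [hF.2, hN]⟩
  · rw [addMonomial, Function.update_of_ne hj]
    exact hF

lemma continuous_jetF_addMonomial {i : Fin k} (hF : AnalyticAt ℂ (F i) 0) (N m : ℕ) :
    Continuous fun v => jetF n k m (addMonomial F i N v) := by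
  refine continuous_pi fun j => continuous_pi fun r => ?_
  rcases eq_or_ne j i with rfl | hj
  · have hderiv (v : Fin n → ℂ) : jetF n k m (addMonomial F j N v) j r =
        iteratedDeriv r (F j) 0 + iteratedDeriv r (fun t : ℂ => t ^ N) 0 • v := by
      rw [jetF, jet, addMonomial, Function.update_self,
        iteratedDeriv_fun_add hF.contDiffAt (by fun_prop), iteratedDeriv_smul_const (by fun_prop)]
    simp only [hderiv]
    fun_prop
  · simp only [jetF, addMonomial, Function.update_of_ne hj]
    exact continuous_const

end Deformation

section Family

variable {d : ℕ} {F : Fin 2 → ℂ → Fin d → ℂ}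

/-- The two-parameter deformation of `F` that realizes the moduli of `normalForm e c`. -/
def moduliFamily (F : Fin 2 → ℂ → Fin d → ℂ) (e c : ℂ) : Fin 2 → ℂ → Fin d → ℂ :=
  addMonomial F 1 9 (axis d 0 e + axis d 3 c)

lemma moduliFamily_apply_zero (e c : ℂ) : moduliFamily F e c 0 = F 0 := by
  rw [moduliFamily, addMonomial, Function.update_of_ne zero_ne_one]

lemma moduliFamily_zero_zero : moduliFamily F 0 0 = F := by
  simp only [moduliFamily, axis_eq_smul d _ 0, zero_smul, add_zero, addMonomial_zero]

lemma continuous_jetF_moduliFamily (hF : AnalyticAt ℂ (F 1) 0) (m : ℕ) :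
    Continuous fun z : ℂ × ℂ => jetF d 2 m (moduliFamily F z.1 z.2) := by
  refine (continuous_jetF_addMonomial hF 9 m).comp ?_
  simp only [axis_eq_smul d _ (Prod.fst _), axis_eq_smul d _ (Prod.snd _)]
  fun_prop

lemma moduliFamily_sub_normalForm_isBigO (hF : AnalyticAt ℂ (F 1) 0)
    (hjet : jet d 9 (F 1) = jet d 9 (pad 4 d (normalForm 0 0))) (e c : ℂ) :
    (fun t => moduliFamily F e c 1 t - pad 4 d (normalForm e c) t) =O[𝓝 0] fun t => t ^ 10 := by
  refine (isBigO_sub_of_iteratedDeriv_eq hF (analyticAt_pad analyticAt_normalForm)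
    fun i hi => congrFun hjet ⟨i, hi⟩).congr_left fun t => ?_
  simp only [moduliFamily, addMonomial, Function.update_self, axis_eq_smul d _ e,
    axis_eq_smul d _ c, pad_eq_sum, Fin.sum_univ_four, normalForm, Matrix.cons_val,
    Fin.coe_ofNat_eq_mod, Nat.reduceMod]
  module

lemma isMultigerm_moduliFamily (hd : 4 ≤ d) (hF : ∀ i, IsCurveGerm d (F i))
    (hF0 : F 0 = axis d 0) (hjet : jet d 9 (F 1) = jet d 9 (pad 4 d (normalForm 0 0)))
    (e c : ℂ) : IsMultigerm d 2 (moduliFamily F e c) := by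
  let j : Fin d := Fin.castLE hd 1
  have hO : (fun t => moduliFamily F e c 1 t j - t ^ 5) =O[𝓝 0] fun t => t ^ 10 := by
    refine (isBigO_pi.mp (moduliFamily_sub_normalForm_isBigO (hF 1).1 hjet e c) j).congr_left
      fun t => ?_
    simp [j, pad_castLE, normalForm]
  have hequiv : (fun t => moduliFamily F e c 1 t j) ~[𝓝 0] fun t => t ^ 5 :=
    hO.trans_isLittleO (isLittleO_pow_pow (by norm_num))
  refine isMultigerm_of_axis (fun i => isCurveGerm_addMonomial (hF i) 1 (by norm_num) _)
    ((moduliFamily_apply_zero e c).trans hF0) (j := j) (by simp [j]) ?_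
  filter_upwards [hequiv.symm.isBigO.eq_zero_imp] with t ht h0
  exact pow_eq_zero_iff (by norm_num) |>.mp (ht h0)

end Family

end CurveSing

open CurveSing in
/-- A pair whose second component has `9`-jet `(t⁸, t⁵, t⁶, t⁷, 0, …, 0)` is not simple. -/
theorem not_simple_jet9_t8_t5_t6_t7 (d : ℕ) (hd : 4 ≤ d) (F : Fin 2 → ℂ → Fin d → ℂ)
    (hF : IsMultigerm d 2 F) (h1 : F 0 = axis d 0)
    (h2 : jet d 9 (F 1) = jet d 9 (pad 4 d fun t => ![t ^ 8, t ^ 5, t ^ 6, t ^ 7])) :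
    ¬ Simple d 2 F := by
  have hF1 : AnalyticAt ℂ (F 1) 0 := (hF.1 1).1
  have hjet : jet d 9 (F 1) = jet d 9 (pad 4 d (normalForm 0 0)) := by
    rwa [normalForm_zero_zero]
  rw [← moduliFamily_zero_zero (F := F)]
  refine not_simple_of_modulus (isMultigerm_moduliFamily hd hF.1 h1 hjet)
    (continuous_jetF_moduliFamily hF1) fun e he c c' => ?_
  exact eq_of_aEquiv_of_isBigO_sub_normalForm hd he
    ((moduliFamily_apply_zero e c).trans h1) ((moduliFamily_apply_zero e c').trans h1)
    (moduliFamily_sub_normalForm_isBigO hF1 hjet e c)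
    (moduliFamily_sub_normalForm_isBigO hF1 hjet e c')
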